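/- arXiv:1810.03335 — 2 statements merged into one kernel-verified Lean document; each statement's English description precedes it below -/
import Mathlib

section
/- Let C be a cocommutative rack bialgebra, T = T(Č) the tensor algebra on Č = ker ε equipped with the bialgebra structure extending the coproduct of C, and let J ⊆ T be the two-sided ideal generated by all elements i(y_{(1)}).i(x ◁ y_{(2)}) − i(x).i(y) for x, y ∈ C. Then J is also a coideal: Δ_T(J) ⊆ T ⊗ J + J ⊗ T and ε_T(J) = 0. -/
open TensorProduct

set_option maxHeartbeats 1000000

/-- A rack bialgebra over a field `k`: a counital coaugmented coalgebra
`(C, Δ, ε, 1)` together with a coalgebra morphism `◁ : C ⊗ C → C`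
(given here as a bilinear map `lhd`) which is self-distributive and satisfies
`x ◁ 1 = x`, `1 ◁ x = ε(x)·1` and `ε(x ◁ y) = ε(x)ε(y)`. -/
structure RackBialgebra (k C : Type) [Field k] [AddCommGroup C] [Module k C] where
  comul : C →ₗ[k] C ⊗[k] C
  counit : C →ₗ[k] k
  one : C
  lhd : C →ₗ[k] C →ₗ[k] C
  coassoc : (TensorProduct.assoc k C C C).toLinearMap ∘ₗ
      TensorProduct.map comul LinearMap.id ∘ₗ comul =
    TensorProduct.map LinearMap.id comul ∘ₗ comul
  counit_comul : (TensorProduct.lid k C).toLinearMap ∘ₗ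
      TensorProduct.map counit LinearMap.id ∘ₗ comul = LinearMap.id
  comul_counit : (TensorProduct.rid k C).toLinearMap ∘ₗ
      TensorProduct.map LinearMap.id counit ∘ₗ comul = LinearMap.id
  comul_one : comul one = one ⊗ₜ[k] one
  counit_one : counit one = 1
  lhd_one : ∀ a, lhd a one = a
  one_lhd : ∀ a, lhd one a = counit a • one
  counit_lhd : ∀ a b, counit (lhd a b) = counit a * counit b
  lhd_coalgebra_morphism : comul ∘ₗ TensorProduct.lift lhd =
    TensorProduct.map (TensorProduct.lift lhd) (TensorProduct.lift lhd) ∘ₗ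
      (TensorProduct.tensorTensorTensorComm k C C C C).toLinearMap ∘ₗ
      TensorProduct.map comul comul
  self_distrib : TensorProduct.lift lhd ∘ₗ
      TensorProduct.map (TensorProduct.lift lhd) LinearMap.id =
    TensorProduct.lift lhd ∘ₗ
      TensorProduct.map (TensorProduct.lift lhd) (TensorProduct.lift lhd) ∘ₗ
      (TensorProduct.tensorTensorTensorComm k C C C C).toLinearMap ∘ₗ
      TensorProduct.map LinearMap.id comul

/-- Cocommutativity of the underlying coalgebra of a rack bialgebra. -/
def RackBialgebra.Cocommutative {k C : Type} [Field k] [AddCommGroup C]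
    [Module k C] (R : RackBialgebra k C) : Prop :=
  (TensorProduct.comm k C C).toLinearMap ∘ₗ R.comul = R.comul

open TensorProduct

variable {k C : Type} [Field k] [AddCommGroup C] [Module k C]

/-- `Č = ker ε`, the kernel of the counit of a rack bialgebra. -/
def Cbar (R : RackBialgebra k C) : Submodule k C := LinearMap.ker R.counit

/-- The canonical projection `C → Č`, `x ↦ x − ε(x)·1`. -/
def pbar (R : RackBialgebra k C) : C →ₗ[k] Cbar R :=
  LinearMap.codRestrict (Cbar R)
    (LinearMap.id - LinearMap.toSpanSingleton k C R.one ∘ₗ R.counit)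
    (fun x => by
      simp [Cbar, LinearMap.mem_ker, LinearMap.toSpanSingleton_apply,
        R.counit_one])

/-- The tensor algebra `T = T(Č)` on `Č = ker ε`. -/
abbrev TT (R : RackBialgebra k C) : Type := TensorAlgebra k (Cbar R)

/-- The canonical linear map `i : C → T(Č)`, the identity on `Č` and sending
the coaugmentation `1 ∈ C` to the scalar `1 ∈ T(Č)`. -/
noncomputable def iT (R : RackBialgebra k C) : C →ₗ[k] TT R :=
  TensorAlgebra.ι k ∘ₗ pbar R + Algebra.linearMap k (TT R) ∘ₗ R.counit

/-- The coproduct on `T = T(Č)`: the unique algebra map `T → T ⊗ T` with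
`Δ_T(i(x)) = i(x₁) ⊗ i(x₂)`. -/
noncomputable def comulT (R : RackBialgebra k C) : TT R →ₐ[k] TT R ⊗[k] TT R :=
  TensorAlgebra.lift k
    (TensorProduct.map (iT R) (iT R) ∘ₗ R.comul ∘ₗ (Cbar R).subtype)

/-- The counit on `T = T(Č)`: the unique algebra map `T → k` vanishing
on `Č`. -/
noncomputable def counitT (R : RackBialgebra k C) : TT R →ₐ[k] k :=
  TensorAlgebra.lift k (0 : Cbar R →ₗ[k] k)

/-- The element `i(y₁).i(x ◁ y₂)` of `T(Č)`, as a linear map in `x ⊗ y`. -/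
noncomputable def gen1 (R : RackBialgebra k C) : C ⊗[k] C →ₗ[k] TT R :=
  LinearMap.mul' k (TT R) ∘ₗ
    TensorProduct.map (iT R) (iT R ∘ₗ TensorProduct.lift R.lhd) ∘ₗ
    (TensorProduct.leftComm k C C C).toLinearMap ∘ₗ
    TensorProduct.map LinearMap.id R.comul

/-- The element `i(x).i(y)` of `T(Č)`, as a linear map in `x ⊗ y`. -/
noncomputable def gen2 (R : RackBialgebra k C) : C ⊗[k] C →ₗ[k] TT R :=
  LinearMap.mul' k (TT R) ∘ₗ TensorProduct.map (iT R) (iT R)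

/-- The two-sided ideal `J` of `T(Č)` generated by the elements
`i(y₁).i(x ◁ y₂) − i(x).i(y)` for `x, y ∈ C`, as a `k`-submodule. -/
noncomputable def idealJ (R : RackBialgebra k C) : Submodule k (TT R) :=
  Submodule.span k
    {t | ∃ (a b : TT R) (c : C ⊗[k] C), t = a * (gen1 R c - gen2 R c) * b}

/-!
Cocommutativity of `C` says that `Δ : C → C ⊗ C` is itself a coalgebra morphism, so both
`x ⊗ y ↦ i(y₁).i(x ◁ y₂)` and `x ⊗ y ↦ i(x).i(y)` are composites of coalgebra morphisms
`C ⊗ C → T`. The range of a difference `f - g` of coalgebra morphisms is a coideal, because `f` and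
`g` agree modulo it. Finally, the two-sided ideal `I` generated by a coideal `V` of a bialgebra `A`
is a coideal: `A → A ⊗ A → A/I ⊗ A/I` is an algebra morphism, so its kernel is a two-sided ideal,
and it contains `V`.
-/

open Coalgebra

section Coideal

variable {K A D : Type*} [CommRing K]

theorem isCoideal_range_sub [AddCommGroup D] [Module K D] [Coalgebra K D] [AddCommGroup A]
    [Module K A] [Coalgebra K A] (f g : D →ₗc[K] A) :
    (LinearMap.range (f.toLinearMap - g.toLinearMap)).IsCoideal where
  counit_eq_zero := by
    rintro _ ⟨x, rfl⟩
    simp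
  map_mkQ_comul_eq_zero := by
    rintro _ ⟨x, rfl⟩
    set π := (LinearMap.range (f.toLinearMap - g.toLinearMap)).mkQ
    have hπ : π ∘ₗ f.toLinearMap = π ∘ₗ g.toLinearMap := by
      rw [← sub_eq_zero, ← LinearMap.comp_sub]
      exact LinearMap.range_mkQ_comp _
    have hcomul (h : D →ₗc[K] A) :
        map π π (comul (h x)) = map (π ∘ₗ h.toLinearMap) (π ∘ₗ h.toLinearMap) (comul x) := by
      rw [← CoalgHomClass.map_comp_comul_apply, map_map]
      rfl
    rw [LinearMap.sub_apply, map_sub, map_sub, sub_eq_zero]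
    exact (hcomul f).trans (hπ ▸ (hcomul g).symm)

theorem isCoideal_asIdeal_span [Ring A] [Bialgebra K A] (V : Submodule K A) [V.IsCoideal] :
    ((TwoSidedIdeal.span (V : Set A)).asIdeal.restrictScalars K).IsCoideal := by
  set I := (TwoSidedIdeal.span (V : Set A)).asIdeal
  have hVI : V ≤ I.restrictScalars K := fun v hv =>
    TwoSidedIdeal.mem_asIdeal.2 (TwoSidedIdeal.subset_span hv)
  constructor
  · intro x hx
    have hV : TwoSidedIdeal.span (V : Set A) ≤ TwoSidedIdeal.ker (Bialgebra.counitAlgHom K A) :=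
      TwoSidedIdeal.span_le.2 fun v hv =>
        (TwoSidedIdeal.mem_ker _).2 (Submodule.IsCoideal.counit_eq_zero hv)
    exact (TwoSidedIdeal.mem_ker (Bialgebra.counitAlgHom K A)).1
      (hV (TwoSidedIdeal.mem_asIdeal.1 hx))
  · intro x hx
    let φ := (Algebra.TensorProduct.map (Ideal.Quotient.mkₐ K I) (Ideal.Quotient.mkₐ K I)).comp
      (Bialgebra.comulAlgHom K A)
    have hV : TwoSidedIdeal.span (V : Set A) ≤ TwoSidedIdeal.ker φ := by
      refine TwoSidedIdeal.span_le.2 fun v hv => (TwoSidedIdeal.mem_ker _).2 ?_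
      have := congrArg (map (Submodule.factor hVI) (Submodule.factor hVI))
        (Submodule.IsCoideal.map_mkQ_comul_eq_zero hv)
      rwa [map_map, map_zero, Submodule.factor_comp_mk] at this
    exact (TwoSidedIdeal.mem_ker _).1 (hV (TwoSidedIdeal.mem_asIdeal.1 hx))

open scoped Pointwise in
theorem restrictScalars_asIdeal_span [Ring A] [Algebra K A] (s : Set A) :
    (TwoSidedIdeal.span s).asIdeal.restrictScalars K =
      Submodule.span K (Set.univ * s * Set.univ) := by
  apply le_antisymm
  · intro x hx
    have := TwoSidedIdeal.mem_span_iff_mem_addSubgroup_closure.1 (TwoSidedIdeal.mem_asIdeal.1 hx)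
    exact (AddSubgroup.closure_le (Submodule.span K _).toAddSubgroup).2 Submodule.subset_span this
  · rw [Submodule.span_le]
    rintro _ ⟨_, ⟨a, -, v, hv, rfl⟩, b, -, rfl⟩
    exact TwoSidedIdeal.mem_asIdeal.2 <|
      TwoSidedIdeal.mul_mem_right _ _ _ <| TwoSidedIdeal.mul_mem_left _ _ _ <|
        TwoSidedIdeal.subset_span hv

end Coideal

section CoalgHom

variable {K L M N D A : Type*} [CommSemiring K] [AddCommMonoid L] [AddCommMonoid M]
  [AddCommMonoid N] [Module K L] [Module K M] [Module K N] [Coalgebra K L] [Coalgebra K M]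
  [Coalgebra K N] [AddCommMonoid D] [Module K D] [Coalgebra K D] [Semiring A] [Bialgebra K A]

variable (K L M N) in
/-- The exchange `x ⊗ (y ⊗ z) ↦ y ⊗ (x ⊗ z)` of tensor factors, as a morphism of coalgebras. -/
noncomputable def leftCommCoalgHom : L ⊗[K] (M ⊗[K] N) →ₗc[K] M ⊗[K] (L ⊗[K] N) where
  toLinearMap := (leftComm K L M N).toLinearMap
  counit_comp := by
    ext
    simp [mul_right_comm]
  map_comp_comul := by
    ext x y z
    simp only [AlgebraTensorModule.curry_apply, LinearMap.restrictScalars_self, curry_apply,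
      LinearMap.coe_comp, Function.comp_apply, comul_tmul, ← (ℛ K x).eq, ← (ℛ K y).eq,
      ← (ℛ K z).eq, tmul_sum, sum_tmul, map_sum, AlgebraTensorModule.tensorTensorTensorComm_tmul,
      map_tmul, LinearEquiv.coe_coe, leftComm_tmul]
    exact Finset.sum_congr rfl fun _ _ => Finset.sum_comm

/-- The twisted product `x ⊗ y ↦ i(y₁) * i(act (x ⊗ y₂))`, as a morphism of coalgebras:
the left-hand side of the relations `i(y₁).i(x ◁ y₂) = i(x).i(y)`. -/
noncomputable def twistedMulCoalgHom [IsCocomm K D] (i : D →ₗc[K] A) (act : D ⊗[K] D →ₗc[K] D) :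
    D ⊗[K] D →ₗc[K] A :=
  (Bialgebra.mulCoalgHom K A).comp <| (Coalgebra.TensorProduct.map i (i.comp act)).comp <|
    (leftCommCoalgHom K D D D).comp <|
      Coalgebra.TensorProduct.map (.id K D) (comulCoalgHom K D)

end CoalgHom

namespace RackBialgebra

variable (R : RackBialgebra k C)

/-- The underlying coalgebra of a rack bialgebra. It is not an instance since the type `C` does not
determine `R`. -/
noncomputable abbrev toCoalgebra : Coalgebra k C where
  comul := R.comul
  counit := R.counit
  coassoc := R.coassoc
  rTensor_counit_comp_comul :=
    (LinearEquiv.eq_toLinearMap_symm_comp (e₁₂ := TensorProduct.lid k C) _ _).2 R.counit_comul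
  lTensor_counit_comp_comul :=
    (LinearEquiv.eq_toLinearMap_symm_comp (e₁₂ := TensorProduct.rid k C) _ _).2 R.comul_counit

theorem coe_pbar (x : C) : (pbar R x : C) = x - R.counit x • R.one := rfl

theorem pbar_coe (x : Cbar R) : pbar R x = x :=
  Subtype.ext <| by simp [coe_pbar, LinearMap.mem_ker.1 x.2]

theorem iT_one : iT R R.one = 1 := by
  have pbar_one : pbar R R.one = 0 := Subtype.ext <| by simp [coe_pbar, R.counit_one]
  simp [iT, pbar_one, R.counit_one]

theorem iT_comp_subtype : iT R ∘ₗ (Cbar R).subtype = TensorAlgebra.ι k := by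
  ext x
  simp [iT, pbar_coe, LinearMap.mem_ker.1 x.2]

theorem algHom_ext_iT {A : Type*} [Semiring A] [Algebra k A] {f g : TT R →ₐ[k] A}
    (h : f.toLinearMap ∘ₗ iT R = g.toLinearMap ∘ₗ iT R) : f = g := by
  apply TensorAlgebra.hom_ext
  rw [← iT_comp_subtype, ← LinearMap.comp_assoc, h, LinearMap.comp_assoc]

theorem comulT_comp_iT :
    letI := R.toCoalgebra
    (comulT R).toLinearMap ∘ₗ iT R = map (iT R) (iT R) ∘ₗ Coalgebra.comul := by
  ext x
  change comulT R (iT R x) = map (iT R) (iT R) (R.comul x)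
  have hx : comulT R (iT R x) = map (iT R) (iT R) (R.comul (pbar R x : C)) +
      algebraMap k _ (R.counit x) := by
    simp [iT, comulT]
  simp [hx, coe_pbar, R.comul_one, iT_one, Algebra.algebraMap_eq_smul_one,
    Algebra.TensorProduct.one_def]

theorem counitT_comp_iT :
    letI := R.toCoalgebra
    (counitT R).toLinearMap ∘ₗ iT R = Coalgebra.counit := by
  ext x
  change counitT R (iT R x) = R.counit x
  simp [iT, counitT]

/-- The bialgebra structure on `T(Č)` extending the coproduct of `C`. -/
noncomputable instance instBialgebraTT : Bialgebra k (TT R) := by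
  letI := R.toCoalgebra
  refine .ofAlgHom (comulT R) (counitT R) ?_ ?_ ?_ <;>
    apply algHom_ext_iT <;>
    simp only [coassoc_simps, AlgHom.comp_toLinearMap, Algebra.TensorProduct.toLinearMap_map,
      comulT_comp_iT, counitT_comp_iT]
  · simp [coassoc_simps]
  · rw [CoassocSimps.map_counit_comp_comul_left]
    rfl
  · rw [CoassocSimps.map_counit_comp_comul_right]
    rfl

/-- The canonical map `i : C → T(Č)`, as a morphism of coalgebras. -/
noncomputable def iTCoalgHom : letI := R.toCoalgebra; C →ₗc[k] TT R :=
  letI := R.toCoalgebra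
  { iT R with
    counit_comp := R.counitT_comp_iT
    map_comp_comul := R.comulT_comp_iT.symm }

/-- The rack operation `x ⊗ y ↦ x ◁ y`, as a morphism of coalgebras. -/
noncomputable def lhdCoalgHom : letI := R.toCoalgebra; C ⊗[k] C →ₗc[k] C :=
  letI := R.toCoalgebra
  { lift R.lhd with
    counit_comp := by
      ext x y
      exact (R.counit_lhd x y).trans (mul_comm _ _)
    map_comp_comul := R.lhd_coalgebra_morphism.symm }

theorem idealJ_eq_asIdeal_span :
    idealJ R = (TwoSidedIdeal.span
      (LinearMap.range (gen1 R - gen2 R) : Set (TT R))).asIdeal.restrictScalars k := by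
  rw [restrictScalars_asIdeal_span, idealJ]
  congr 1
  ext t
  constructor
  · rintro ⟨a, b, c, rfl⟩
    exact Set.mul_mem_mul (Set.mul_mem_mul (Set.mem_univ a) ⟨c, rfl⟩) (Set.mem_univ b)
  · rintro ⟨_, ⟨a, -, _, ⟨c, rfl⟩, rfl⟩, b, -, rfl⟩
    exact ⟨a, b, c, rfl⟩

theorem isCoideal_idealJ (cocomm : R.Cocommutative) : (idealJ R).IsCoideal := by
  let := R.toCoalgebra
  have : IsCocomm k C := ⟨cocomm⟩
  let f : C ⊗[k] C →ₗc[k] TT R := twistedMulCoalgHom R.iTCoalgHom R.lhdCoalgHom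
  let g : C ⊗[k] C →ₗc[k] TT R := (Bialgebra.mulCoalgHom k (TT R)).comp
    (Coalgebra.TensorProduct.map R.iTCoalgHom R.iTCoalgHom)
  have gen1_eq : gen1 R = f.toLinearMap := rfl
  have gen2_eq : gen2 R = g.toLinearMap := rfl
  have := isCoideal_range_sub f g
  rw [idealJ_eq_asIdeal_span, gen1_eq, gen2_eq]
  exact isCoideal_asIdeal_span _

end RackBialgebra

/-- if `C` is a cocommutative rack bialgebra, then the two-sided
ideal `J = ⟨i(y₁).i(x ◁ y₂) − i(x).i(y)⟩` of `T(Č)` is a coideal: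
`Δ_T(J) ⊆ T ⊗ J + J ⊗ T` and `ε_T(J) = 0`. -/
theorem idealJ_is_coideal (R : RackBialgebra k C) (cocomm : R.Cocommutative) :
    (∀ t ∈ idealJ R, (comulT R).toLinearMap t ∈
      LinearMap.range (TensorProduct.map (LinearMap.id (M := TT R))
        (idealJ R).subtype) ⊔
      LinearMap.range (TensorProduct.map (idealJ R).subtype
        (LinearMap.id (M := TT R)))) ∧
    (∀ t ∈ idealJ R, counitT R t = 0) := by
  exact ((Submodule.isCoideal_iff_comul_mem _).1 (R.isCoideal_idealJ cocomm)).symm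
end

section
/- For the cocommutative rack bialgebra C = k·1 ⊕ k·g with Δ(g) = g ⊗ g, ε(g) = 1, and g ◁ g = g, the universal enveloping algebra U(C) is isomorphic as a bialgebra to the polynomial algebra k[X] with X group-like, and this bialgebra admits no antipode (it is not a Hopf algebra). -/
open TensorProduct

set_option maxHeartbeats 1000000

open TensorProduct

variable {k C : Type} [Field k] [AddCommGroup C] [Module k C]

/-- The relation on `T(Č)` identifying `i(y₁).i(x ◁ y₂)` with `i(x).i(y)`. -/
noncomputable def relU (R : RackBialgebra k C) : TT R → TT R → Prop :=
  fun s t => ∃ c : C ⊗[k] C, s = gen1 R c ∧ t = gen2 R c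

/-- The universal enveloping algebra `U(C) = T(Č)/J`. -/
abbrev UC (R : RackBialgebra k C) : Type := RingQuot (relU R)

/-- The canonical map `q : C → U(C)`. -/
noncomputable def qU (R : RackBialgebra k C) : C →ₗ[k] UC R :=
  (RingQuot.mkAlgHom k (relU R)).toLinearMap ∘ₗ iT R


/-- The coproduct of the rack bialgebra `C = k·1 ⊕ k·g` in which both `1=(1,0)`
and `g=(0,1)` are group-like. -/
noncomputable def comulGG : (k × k) →ₗ[k] (k × k) ⊗[k] (k × k) :=
  LinearMap.toSpanSingleton k ((k × k) ⊗[k] (k × k))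
      (((1 : k), (0 : k)) ⊗ₜ[k] ((1 : k), (0 : k))) ∘ₗ LinearMap.fst k k k +
  LinearMap.toSpanSingleton k ((k × k) ⊗[k] (k × k))
      (((0 : k), (1 : k)) ⊗ₜ[k] ((0 : k), (1 : k))) ∘ₗ LinearMap.snd k k k

/-- The counit of the rack bialgebra `C = k·1 ⊕ k·g`. -/
def counitGG : (k × k) →ₗ[k] k := LinearMap.fst k k k + LinearMap.snd k k k

/-- The rack product with `g ◁ g = g` (conjugation rack of the trivial group):
`(a·1 + x·g) ◁ (b·1 + y·g) = (b + y) • (a·1 + x·g)`. -/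
def lhdGGg : (k × k) →ₗ[k] (k × k) →ₗ[k] (k × k) :=
  LinearMap.mk₂ k (fun c d => (d.1 + d.2) • c)
    (fun m₁ m₂ n => by simp [smul_add])
    (fun a m n => by simp [smul_comm a])
    (fun m n₁ n₂ => by
      simp [Prod.fst_add, Prod.snd_add, add_smul]; module)
    (fun a m n => by
      simp [Prod.smul_fst, Prod.smul_snd, smul_eq_mul, mul_smul]; module)

/-!
Since `g ◁ g = g`, the rack product is `x ◁ y = ε(y) x`, so the relations defining `U(C)` only say
that `i(x)` and `i(y)` commute. As `Č` is the line spanned by `g - 1`, the algebra `T(Č)` is the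
polynomial algebra in `g - 1`, hence also in `i(g)`. It is already commutative, so
`U(C) = T(Č) = k[X]` with `X = i(g)`. An antipode would invert every group-like element, but `X` is
not a unit.
-/

open Polynomial

theorem span_one_zero_zero_one (S : Type*) [Semiring S] :
    Submodule.span S {((1 : S), (0 : S)), (0, 1)} = ⊤ :=
  eq_top_iff.mpr fun x _ => Submodule.mem_span_pair.mpr ⟨x.1, x.2, by simp⟩

section General

variable {S A B M : Type*} [CommSemiring S] [Semiring A] [Algebra S A] [Semiring B] [Algebra S B]
  [AddCommMonoid M] [Module S M]

/-- The tensor algebra of a free module of rank one, identified with polynomials in one variable: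
the coordinate `ℓ` singles out the generator `ℓ.symm 1`, which corresponds to `X`. -/
noncomputable def tensorAlgebraEquivPolynomial (ℓ : M ≃ₗ[S] S) : TensorAlgebra S M ≃ₐ[S] S[X] :=
  AlgEquiv.ofAlgHom (TensorAlgebra.lift S (LinearMap.toSpanSingleton S S[X] X ∘ₗ ℓ.toLinearMap))
    (aeval (TensorAlgebra.ι S (ℓ.symm 1)))
    (by ext; simp)
    (by
      ext v
      have hv : ℓ v • ℓ.symm 1 = v := by rw [← map_smul, smul_eq_mul, mul_one, ℓ.symm_apply_apply]
      simp [map_smul (aeval (R := S) _), ← LinearMap.map_smul, hv])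

theorem tensorAlgebraEquivPolynomial_ι (ℓ : M ≃ₗ[S] S) (v : M) :
    tensorAlgebraEquivPolynomial ℓ (TensorAlgebra.ι S v) = ℓ v • X := by
  simp [tensorAlgebraEquivPolynomial]

theorem ringQuot_mkAlgHom_bijective {r : A → A → Prop} (hr : ∀ ⦃a b⦄, r a b → a = b) :
    Function.Bijective (RingQuot.mkAlgHom S r) := by
  refine ⟨Function.LeftInverse.injective (g := RingQuot.liftAlgHom S ⟨AlgHom.id S A, hr⟩) ?_,
    RingQuot.mkAlgHom_surjective S r⟩
  exact RingQuot.liftAlgHom_mkAlgHom_apply S (AlgHom.id S A) hr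

theorem algHom_ext_of_algEquiv_polynomial (e : A ≃ₐ[S] S[X]) {g : A} (hg : e g = X)
    {φ ψ : A →ₐ[S] B} (h : φ g = ψ g) : φ = ψ := by
  have hX : e.symm X = g := by rw [← hg, e.symm_apply_apply]
  have hcomp : φ.comp e.symm.toAlgHom = ψ.comp e.symm.toAlgHom :=
    Polynomial.algHom_ext (by simpa [hX] using h)
  ext a
  simpa using DFunLike.congr_fun hcomp (e a)

theorem antipode_mul_self_of_groupLike {Δ : A →ₗ[S] A ⊗[S] A} {ε : A →ₗ[S] S} {σ : A →ₗ[S] A}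
    (hσ : LinearMap.mul' S A ∘ₗ TensorProduct.map σ LinearMap.id ∘ₗ Δ = Algebra.linearMap S A ∘ₗ ε)
    {g : A} (hΔ : Δ g = g ⊗ₜ g) (hε : ε g = 1) : σ g * g = 1 := by
  simpa [hΔ, hε] using LinearMap.congr_fun hσ g

theorem not_exists_antipode_polynomial [Nontrivial S] {Δ : S[X] →ₗ[S] S[X] ⊗[S] S[X]}
    {ε : S[X] →ₗ[S] S} (hΔ : Δ X = X ⊗ₜ X) (hε : ε X = 1) :
    ¬ ∃ σ : S[X] →ₗ[S] S[X],
      LinearMap.mul' S S[X] ∘ₗ TensorProduct.map σ LinearMap.id ∘ₗ Δ =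
        Algebra.linearMap S S[X] ∘ₗ ε := by
  rintro ⟨σ, hσ⟩
  exact not_isUnit_X (.of_mul_eq_one_right _ (antipode_mul_self_of_groupLike hσ hΔ hε))

end General

section RackBialgebra

variable (R : RackBialgebra k C)

theorem coe_pbar (x : C) : (pbar R x : C) = x - R.counit x • R.one := rfl

theorem iT_apply (x : C) :
    iT R x = TensorAlgebra.ι k (pbar R x) + algebraMap k (TT R) (R.counit x) := rfl

theorem iT_one : iT R R.one = 1 := by
  have hpbar : pbar R R.one = 0 := Subtype.ext (by simp [coe_pbar, R.counit_one])
  simp [iT_apply, hpbar, R.counit_one]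

theorem counitT_iT (x : C) : counitT R (iT R x) = R.counit x := by
  simp [counitT, iT_apply]

theorem comulT_iT (x : C) :
    comulT R (iT R x) = TensorProduct.map (iT R) (iT R) (R.comul x) := by
  rw [iT_apply, map_add, AlgHom.commutes]
  simp [comulT, coe_pbar, R.comul_one, iT_one, Algebra.algebraMap_eq_smul_one,
    Algebra.TensorProduct.one_def]

theorem gen2_tmul (x y : C) : gen2 R (x ⊗ₜ y) = iT R x * iT R y := by
  simp [gen2]

variable {R}

theorem gen1_tmul_of_trivial (hlhd : ∀ x y, R.lhd x y = R.counit y • x) (x y : C) :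
    gen1 R (x ⊗ₜ y) = iT R y * iT R x := by
  have hsum (t : C ⊗[k] C) :
      LinearMap.mul' k (TT R) (TensorProduct.map (iT R) (iT R ∘ₗ TensorProduct.lift R.lhd)
        (TensorProduct.leftComm k C C C (x ⊗ₜ t))) =
      iT R (TensorProduct.rid k C (TensorProduct.map LinearMap.id R.counit t)) * iT R x := by
    induction t with
    | zero => simp
    | add s t hs ht => simp only [TensorProduct.tmul_add, map_add, add_mul, hs, ht]
    | tmul a b => simp [hlhd]
  have hcounit := LinearMap.congr_fun R.comul_counit y
  simp only [LinearMap.comp_apply, LinearEquiv.coe_coe, LinearMap.id_apply] at hcounit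
  simpa [gen1, hcounit] using hsum (R.comul y)

theorem eq_of_relU_of_trivial (hlhd : ∀ x y, R.lhd x y = R.counit y • x)
    (hcomm : ∀ s t : TT R, s * t = t * s) ⦃s t : TT R⦄ (h : relU R s t) : s = t := by
  obtain ⟨c, rfl, rfl⟩ := h
  have hgen : gen1 R = gen2 R := TensorProduct.ext' fun x y => by
    rw [gen1_tmul_of_trivial hlhd, gen2_tmul, hcomm]
  rw [hgen]

theorem exists_comulU_counitU (hrel : ∀ ⦃s t⦄, relU R s t → s = t) :
    ∃ (comulU : UC R →ₐ[k] UC R ⊗[k] UC R) (counitU : UC R →ₐ[k] k),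
      (comulU.toLinearMap ∘ₗ (RingQuot.mkAlgHom k (relU R)).toLinearMap =
        TensorProduct.map (RingQuot.mkAlgHom k (relU R)).toLinearMap
            (RingQuot.mkAlgHom k (relU R)).toLinearMap ∘ₗ
          (comulT R).toLinearMap) ∧
      (counitU.toLinearMap ∘ₗ (RingQuot.mkAlgHom k (relU R)).toLinearMap =
        (counitT R).toLinearMap) :=
  let mk := RingQuot.mkAlgHom k (relU R)
  ⟨RingQuot.liftAlgHom k ⟨(Algebra.TensorProduct.map mk mk).comp (comulT R),
      fun _ _ h => congrArg _ (hrel h)⟩,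
    RingQuot.liftAlgHom k ⟨counitT R, fun _ _ h => congrArg _ (hrel h)⟩,
    LinearMap.ext fun _ => RingQuot.liftAlgHom_mkAlgHom_apply _ _ _ _,
    LinearMap.ext fun _ => RingQuot.liftAlgHom_mkAlgHom_apply _ _ _ _⟩

theorem comulU_qU {comulU : UC R →ₐ[k] UC R ⊗[k] UC R}
    (h : comulU.toLinearMap ∘ₗ (RingQuot.mkAlgHom k (relU R)).toLinearMap =
      TensorProduct.map (RingQuot.mkAlgHom k (relU R)).toLinearMap
          (RingQuot.mkAlgHom k (relU R)).toLinearMap ∘ₗ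
        (comulT R).toLinearMap) (x : C) :
    comulU (qU R x) = TensorProduct.map (qU R) (qU R) (R.comul x) := by
  rw [qU, TensorProduct.map_comp, LinearMap.comp_apply, LinearMap.comp_apply, ← comulT_iT]
  exact LinearMap.congr_fun h (iT R x)

theorem counitU_qU {counitU : UC R →ₐ[k] k}
    (h : counitU.toLinearMap ∘ₗ (RingQuot.mkAlgHom k (relU R)).toLinearMap =
      (counitT R).toLinearMap) (x : C) :
    counitU (qU R x) = R.counit x := by
  rw [← counitT_iT]
  exact LinearMap.congr_fun h (iT R x)

section GroupLikeGenerator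

variable {g : C}

theorem lhd_eq_counit_smul (hε : R.counit g = 1) (hspan : Submodule.span k {R.one, g} = ⊤)
    (hgg : R.lhd g g = g) (x y : C) : R.lhd x y = R.counit y • x := by
  have hg_lhd : R.lhd g = R.counit.smulRight g := LinearMap.ext_on hspan <| by
    rintro _ (rfl | rfl) <;> simp [R.lhd_one, R.counit_one, hgg, hε]
  have hflip : R.lhd.flip y = R.counit y • LinearMap.id := LinearMap.ext_on hspan <| by
    rintro _ (rfl | rfl) <;> simp [R.one_lhd, hg_lhd]
  exact LinearMap.congr_fun hflip x

theorem Cbar_eq_span_singleton (hε : R.counit g = 1)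
    (hspan : Submodule.span k {R.one, g} = ⊤) : Cbar R = Submodule.span k {g - R.one} := by
  refine le_antisymm (fun v hv => ?_) ?_
  · obtain ⟨a, b, rfl⟩ := Submodule.mem_span_pair.mp (hspan ▸ Submodule.mem_top : v ∈ _)
    have hab : a + b = 0 := by simpa [Cbar, R.counit_one, hε] using hv
    exact Submodule.mem_span_singleton.mpr ⟨b, by rw [eq_neg_of_add_eq_zero_left hab]; module⟩
  · simp [Submodule.span_le, Cbar, R.counit_one, hε]

theorem exists_Cbar_linearEquiv (hε : R.counit g = 1) (hne : g ≠ R.one)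
    (hspan : Submodule.span k {R.one, g} = ⊤) : ∃ ℓ : Cbar R ≃ₗ[k] k, ℓ (pbar R g) = 1 := by
  let coord := LinearEquiv.toSpanNonzeroSingleton k C (g - R.one) (sub_ne_zero.mpr hne) ≪≫ₗ
    LinearEquiv.ofEq _ _ (Cbar_eq_span_singleton hε hspan).symm
  have hcoord : coord 1 = pbar R g := Subtype.ext (by simp [coord, coe_pbar, hε])
  exact ⟨coord.symm, by rw [← hcoord, coord.symm_apply_apply]⟩

theorem exists_TT_algEquiv_polynomial (hε : R.counit g = 1) (hne : g ≠ R.one)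
    (hspan : Submodule.span k {R.one, g} = ⊤) :
    ∃ θ : TT R ≃ₐ[k] k[X], θ (iT R g) = X := by
  obtain ⟨ℓ, hℓ⟩ := exists_Cbar_linearEquiv hε hne hspan
  refine ⟨(tensorAlgebraEquivPolynomial ℓ).trans (algEquivAevalXAddC (-1)), ?_⟩
  simp [iT_apply, tensorAlgebraEquivPolynomial_ι, hℓ, hε]

theorem eq_of_relU_of_span_pair (hε : R.counit g = 1) (hne : g ≠ R.one)
    (hspan : Submodule.span k {R.one, g} = ⊤) (hgg : R.lhd g g = g) ⦃s t : TT R⦄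
    (h : relU R s t) : s = t := by
  obtain ⟨θ, -⟩ := exists_TT_algEquiv_polynomial hε hne hspan
  have hcomm (s t : TT R) : s * t = t * s := θ.injective (by simp only [map_mul, mul_comm])
  exact eq_of_relU_of_trivial (lhd_eq_counit_smul hε hspan hgg) hcomm h

theorem exists_UC_algEquiv_polynomial (hε : R.counit g = 1) (hne : g ≠ R.one)
    (hspan : Submodule.span k {R.one, g} = ⊤) (hgg : R.lhd g g = g) :
    ∃ e : UC R ≃ₐ[k] k[X], e (qU R g) = X := by
  obtain ⟨θ, hθ⟩ := exists_TT_algEquiv_polynomial hε hne hspan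
  let π : TT R ≃ₐ[k] UC R := AlgEquiv.ofBijective (RingQuot.mkAlgHom k (relU R))
    (ringQuot_mkAlgHom_bijective (eq_of_relU_of_span_pair hε hne hspan hgg))
  have hπ : qU R g = π (iT R g) := rfl
  exact ⟨π.symm.trans θ, by simp [hπ, hθ]⟩

end GroupLikeGenerator

end RackBialgebra

theorem UC_trivial_rack_polynomial_no_antipode_general (R : RackBialgebra k C) {g : C}
    (hΔ : R.comul g = g ⊗ₜ[k] g) (hε : R.counit g = 1) (hne : g ≠ R.one)
    (hspan : Submodule.span k {R.one, g} = ⊤) (hgg : R.lhd g g = g) :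
    ∃ (comulU : UC R →ₐ[k] UC R ⊗[k] UC R) (counitU : UC R →ₐ[k] k),
      (comulU.toLinearMap ∘ₗ (RingQuot.mkAlgHom k (relU R)).toLinearMap =
        TensorProduct.map (RingQuot.mkAlgHom k (relU R)).toLinearMap
            (RingQuot.mkAlgHom k (relU R)).toLinearMap ∘ₗ
          (comulT R).toLinearMap) ∧
      (counitU.toLinearMap ∘ₗ (RingQuot.mkAlgHom k (relU R)).toLinearMap =
        (counitT R).toLinearMap) ∧
      ∃ (dP : k[X] →ₐ[k] k[X] ⊗[k] k[X]) (eP : k[X] →ₐ[k] k),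
        dP X = X ⊗ₜ[k] X ∧
        eP X = 1 ∧
        (∃ e : UC R ≃ₐ[k] k[X],
          e (qU R g) = X ∧
          TensorProduct.map e.toLinearMap e.toLinearMap ∘ₗ
              comulU.toLinearMap = dP.toLinearMap ∘ₗ e.toLinearMap ∧
          eP.toLinearMap ∘ₗ e.toLinearMap = counitU.toLinearMap) ∧
        ¬ ∃ S : k[X] →ₗ[k] k[X],
            LinearMap.mul' k k[X] ∘ₗ
              TensorProduct.map S LinearMap.id ∘ₗ dP.toLinearMap =
                Algebra.linearMap k k[X] ∘ₗ eP.toLinearMap ∧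
            LinearMap.mul' k k[X] ∘ₗ
              TensorProduct.map LinearMap.id S ∘ₗ dP.toLinearMap =
                Algebra.linearMap k k[X] ∘ₗ eP.toLinearMap := by
  obtain ⟨e, he⟩ := exists_UC_algEquiv_polynomial hε hne hspan hgg
  obtain ⟨comulU, counitU, hcomulU, hcounitU⟩ :=
    exists_comulU_counitU (eq_of_relU_of_span_pair hε hne hspan hgg)
  have he_comul : (Algebra.TensorProduct.map e.toAlgHom e.toAlgHom).comp comulU =
      (aeval (X ⊗ₜ[k] X)).comp e.toAlgHom :=
    algHom_ext_of_algEquiv_polynomial e he (by simp [comulU_qU hcomulU, hΔ, he])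
  have he_counit : (aeval 1).comp e.toAlgHom = counitU :=
    algHom_ext_of_algEquiv_polynomial e he (by simp [counitU_qU hcounitU, hε, he])
  refine ⟨comulU, counitU, hcomulU, hcounitU,
    aeval (X ⊗ₜ X), aeval 1, aeval_X _, aeval_X _,
    ⟨e, he, congrArg AlgHom.toLinearMap he_comul, congrArg AlgHom.toLinearMap he_counit⟩, ?_⟩
  rintro ⟨S, hS, -⟩
  exact not_exists_antipode_polynomial (aeval_X _) (aeval_X _) ⟨S, hS⟩

/-- for the cocommutative rack bialgebra `C = k·1 ⊕ k·g` with
`g` group-like and `g ◁ g = g`, the universal enveloping algebra `U(C)` is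
isomorphic as a bialgebra to the polynomial bialgebra `k[X]` with `X`
group-like, and this bialgebra admits no antipode. -/
theorem UC_trivial_rack_polynomial_no_antipode
    (R : RackBialgebra k (k × k))
    (hc : R.comul = comulGG (k := k)) (he : R.counit = counitGG (k := k))
    (h1 : R.one = ((1 : k), (0 : k))) (hl : R.lhd = lhdGGg (k := k)) :
    -- the induced bialgebra structure on `U(C)`
    ∃ (comulU : UC R →ₐ[k] UC R ⊗[k] UC R) (counitU : UC R →ₐ[k] k),
      (comulU.toLinearMap ∘ₗ (RingQuot.mkAlgHom k (relU R)).toLinearMap =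
        TensorProduct.map (RingQuot.mkAlgHom k (relU R)).toLinearMap
            (RingQuot.mkAlgHom k (relU R)).toLinearMap ∘ₗ
          (comulT R).toLinearMap) ∧
      (counitU.toLinearMap ∘ₗ (RingQuot.mkAlgHom k (relU R)).toLinearMap =
        (counitT R).toLinearMap) ∧
      -- the polynomial bialgebra `k[X]` with `X` group-like
      ∃ (dP : Polynomial k →ₐ[k] Polynomial k ⊗[k] Polynomial k)
        (eP : Polynomial k →ₐ[k] k),
        dP Polynomial.X = Polynomial.X ⊗ₜ[k] Polynomial.X ∧
        eP Polynomial.X = 1 ∧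
        -- `U(C) ≅ k[X]` as bialgebras, `q(g) ↦ X`
        (∃ e : UC R ≃ₐ[k] Polynomial k,
          e (qU R ((0 : k), (1 : k))) = Polynomial.X ∧
          TensorProduct.map e.toLinearMap e.toLinearMap ∘ₗ
              comulU.toLinearMap = dP.toLinearMap ∘ₗ e.toLinearMap ∧
          eP.toLinearMap ∘ₗ e.toLinearMap = counitU.toLinearMap) ∧
        -- `k[X]` with `X` group-like has no antipode
        ¬ ∃ S : Polynomial k →ₗ[k] Polynomial k,
            LinearMap.mul' k (Polynomial k) ∘ₗ
              TensorProduct.map S LinearMap.id ∘ₗ dP.toLinearMap =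
                Algebra.linearMap k (Polynomial k) ∘ₗ eP.toLinearMap ∧
            LinearMap.mul' k (Polynomial k) ∘ₗ
              TensorProduct.map LinearMap.id S ∘ₗ dP.toLinearMap =
                Algebra.linearMap k (Polynomial k) ∘ₗ eP.toLinearMap := by
  refine UC_trivial_rack_polynomial_no_antipode_general R ?_ ?_ ?_ ?_ ?_
  · simp [hc, comulGG]
  · simp [he, counitGG]
  · simp [h1]
  · rw [h1, span_one_zero_zero_one]
  · simp [hl, lhdGGg]
end
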